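/- If a homothetic copy λK₁ + u (λ > 0, u ∈ ℝ³) contains the centres of three distinct facets of K₁, then λ ≥ 2/3. -/

import Mathlib

open Pointwise

/-- The unit cross-polytope in ℝ³. -/
def K1 : Set (Fin 3 → ℝ) := {x | |x 0| + |x 1| + |x 2| ≤ 1}

/-- The facet of `K1` determined by a sign vector `e` (each `e i` being `1` or `-1`). -/
def K1Facet (e : Fin 3 → ℝ) : Set (Fin 3 → ℝ) :=
  convexHull ℝ {![e 0, 0, 0], ![0, e 1, 0], ![0, 0, e 2]}

/-- The centre (centroid) of the facet determined by the sign vector `e`. -/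
noncomputable def K1FacetCentre (e : Fin 3 → ℝ) : Fin 3 → ℝ :=
  (1 / 3 : ℝ) • (![e 0, 0, 0] + ![0, e 1, 0] + ![0, 0, e 2])

/-!
Two points of a translate of `r • K`, with `K` the unit ball of the `ℓ¹`-norm, are at `ℓ¹`-distance
at most `2 * |r|`. The facet centres of the cross-polytope in `ℝⁿ` are `n⁻¹ • e` with `e` a sign
vector, and sign vectors `e`, `f` are at `ℓ¹`-distance twice their Hamming distance. The three
Hamming distances between three sign vectors have an even sum, since each coordinate contributes
`0` or `2` to it. So, when the vectors are distinct, these distances cannot all be equal to `1`, and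
two of the centres are at distance at least `4 / n`.
-/

section Hamming

variable {ι : Type*} [Fintype ι] {β : ι → Type*} [∀ i, DecidableEq (β i)] {x y z : ∀ i, β i}

theorem even_hammingDist_add_hammingDist_add_hammingDist
    (h : ∀ i, x i = y i ∨ y i = z i ∨ x i = z i) :
    Even (hammingDist x y + hammingDist y z + hammingDist x z) := by
  simp only [hammingDist, Finset.card_filter, ← Finset.sum_add_distrib]
  refine Finset.even_sum _ fun i _ ↦ ?_
  grind

theorem two_le_hammingDist_of_pairwise_ne (h : ∀ i, x i = y i ∨ y i = z i ∨ x i = z i)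
    (hxy : x ≠ y) (hyz : y ≠ z) (hxz : x ≠ z) :
    2 ≤ hammingDist x y ∨ 2 ≤ hammingDist y z ∨ 2 ≤ hammingDist x z := by
  have heven := even_hammingDist_add_hammingDist_add_hammingDist h
  have hxy_pos := hammingDist_pos.mpr hxy
  have hyz_pos := hammingDist_pos.mpr hyz
  have hxz_pos := hammingDist_pos.mpr hxz
  grind

end Hamming

/-- The unit cross-polytope in `ℝ^ι`, that is, the closed unit ball of the `ℓ¹`-norm. It is a set of
plain functions, like `K1`, so that no passage to `PiLp 1` is needed. -/
def crossPolytope (ι : Type*) [Fintype ι] : Set (ι → ℝ) := {x | ∑ i, |x i| ≤ 1}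

section CrossPolytope

variable {ι : Type*} [Fintype ι] {c r : ℝ} {u e f : ι → ℝ}

theorem sum_abs_sub_le_of_mem_vadd_smul_crossPolytope {x y : ι → ℝ}
    (hx : x ∈ u +ᵥ r • crossPolytope ι) (hy : y ∈ u +ᵥ r • crossPolytope ι) :
    ∑ i, |x i - y i| ≤ 2 * |r| := by
  obtain ⟨_, ⟨a, ha : ∑ i, |a i| ≤ 1, rfl⟩, rfl⟩ := hx
  obtain ⟨_, ⟨b, hb : ∑ i, |b i| ≤ 1, rfl⟩, rfl⟩ := hy
  calc ∑ i, |(u +ᵥ r • a) i - (u +ᵥ r • b) i|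
      = |r| * ∑ i, |a i - b i| := by
        simp [Finset.mul_sum, ← mul_sub, abs_mul]
    _ ≤ |r| * ∑ i, (|a i| + |b i|) := by gcongr; exact abs_sub _ _
    _ ≤ |r| * (1 + 1) := by rw [Finset.sum_add_distrib]; gcongr
    _ = 2 * |r| := by ring

theorem sum_abs_sub_eq_two_mul_hammingDist
    (he : ∀ i, e i = 1 ∨ e i = -1) (hf : ∀ i, f i = 1 ∨ f i = -1) :
    ∑ i, |e i - f i| = 2 * hammingDist e f := by
  have habs (i : ι) : |e i - f i| = 2 * if e i ≠ f i then 1 else 0 := by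
    rcases he i with hei | hei <;> rcases hf i with hfi | hfi <;> norm_num [hei, hfi]
  simp only [habs, ← Finset.mul_sum, hammingDist, Finset.natCast_card_filter]

theorem abs_mul_hammingDist_le_of_mem_vadd_smul_crossPolytope
    (he : ∀ i, e i = 1 ∨ e i = -1) (hf : ∀ i, f i = 1 ∨ f i = -1)
    (hce : c • e ∈ u +ᵥ r • crossPolytope ι) (hcf : c • f ∈ u +ᵥ r • crossPolytope ι) :
    |c| * hammingDist e f ≤ |r| := by
  have hdist : 2 * (|c| * hammingDist e f) ≤ 2 * |r| :=
    calc 2 * (|c| * hammingDist e f)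
        = |c| * ∑ i, |e i - f i| := by
          rw [sum_abs_sub_eq_two_mul_hammingDist he hf]; ring
      _ = ∑ i, |(c • e) i - (c • f) i| := by simp [Finset.mul_sum, ← mul_sub, abs_mul]
      _ ≤ 2 * |r| := sum_abs_sub_le_of_mem_vadd_smul_crossPolytope hce hcf
  exact le_of_mul_le_mul_left hdist two_pos

end CrossPolytope

/-- The facet centres of the cross-polytope in `ℝⁿ` are the case `c = n⁻¹`. -/
theorem ratio_ge_two_thirds_of_three_centres_general {ι : Type*} [Fintype ι]
    {e₁ e₂ e₃ : ι → ℝ}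
    (he₁ : ∀ i, e₁ i = 1 ∨ e₁ i = -1) (he₂ : ∀ i, e₂ i = 1 ∨ e₂ i = -1)
    (he₃ : ∀ i, e₃ i = 1 ∨ e₃ i = -1)
    (hne₁₂ : e₁ ≠ e₂) (hne₁₃ : e₁ ≠ e₃) (hne₂₃ : e₂ ≠ e₃) {c r : ℝ} {u : ι → ℝ}
    (hc₁ : c • e₁ ∈ u +ᵥ r • crossPolytope ι) (hc₂ : c • e₂ ∈ u +ᵥ r • crossPolytope ι)
    (hc₃ : c • e₃ ∈ u +ᵥ r • crossPolytope ι) :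
    |c| * 2 ≤ |r| := by
  have hcoord (i : ι) : e₁ i = e₂ i ∨ e₂ i = e₃ i ∨ e₁ i = e₃ i := by grind
  have abs_mul_two_le {e f : ι → ℝ} (h : 2 ≤ hammingDist e f) :
      |c| * 2 ≤ |c| * hammingDist e f := by
    gcongr
    exact_mod_cast h
  rcases two_le_hammingDist_of_pairwise_ne hcoord hne₁₂ hne₂₃ hne₁₃ with h₁₂ | h₂₃ | h₁₃
  · exact (abs_mul_two_le h₁₂).trans
      (abs_mul_hammingDist_le_of_mem_vadd_smul_crossPolytope he₁ he₂ hc₁ hc₂)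
  · exact (abs_mul_two_le h₂₃).trans
      (abs_mul_hammingDist_le_of_mem_vadd_smul_crossPolytope he₂ he₃ hc₂ hc₃)
  · exact (abs_mul_two_le h₁₃).trans
      (abs_mul_hammingDist_le_of_mem_vadd_smul_crossPolytope he₁ he₃ hc₁ hc₃)

theorem K1_eq_crossPolytope : K1 = crossPolytope (Fin 3) := by
  simp only [K1, crossPolytope, Fin.sum_univ_three]

theorem K1FacetCentre_eq_smul (e : Fin 3 → ℝ) : K1FacetCentre e = (1 / 3 : ℝ) • e := by
  ext i
  fin_cases i <;> simp [K1FacetCentre]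

/-- If `λ • K1 + u` contains the centres of three distinct facets of `K1`, then `λ ≥ 2/3`. -/
theorem ratio_ge_two_thirds_of_three_centres
    (e₁ e₂ e₃ : Fin 3 → ℝ)
    (he₁ : ∀ i, e₁ i = 1 ∨ e₁ i = -1) (he₂ : ∀ i, e₂ i = 1 ∨ e₂ i = -1)
    (he₃ : ∀ i, e₃ i = 1 ∨ e₃ i = -1)
    (hne₁₂ : K1Facet e₁ ≠ K1Facet e₂) (hne₁₃ : K1Facet e₁ ≠ K1Facet e₃)
    (hne₂₃ : K1Facet e₂ ≠ K1Facet e₃)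
    (lam : ℝ) (hlam : 0 < lam) (u : Fin 3 → ℝ)
    (hc₁ : K1FacetCentre e₁ ∈ u +ᵥ lam • K1)
    (hc₂ : K1FacetCentre e₂ ∈ u +ᵥ lam • K1)
    (hc₃ : K1FacetCentre e₃ ∈ u +ᵥ lam • K1) :
    2 / 3 ≤ lam := by
  rw [K1_eq_crossPolytope, K1FacetCentre_eq_smul] at hc₁ hc₂ hc₃
  have hratio := ratio_ge_two_thirds_of_three_centres_general he₁ he₂ he₃
    (mt (congrArg K1Facet) hne₁₂) (mt (congrArg K1Facet) hne₁₃) (mt (congrArg K1Facet) hne₂₃)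
    hc₁ hc₂ hc₃
  rw [abs_of_pos hlam, abs_of_pos (by norm_num)] at hratio
  linarith
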